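/- Let n ≥ 1, α > 0, and let f_* : Γₙ⁺ → (0,∞) be homogeneous of degree one with f_*(1,…,1) = 1. Then z*(ξ,t) = −[(1+α)t]^{1/(1+α)}·√(1−|ξ|²) satisfies the dual flow equation ∂ₜz* = −F_*(A*[z*(·,t)])^{−α}·w* at every (ξ,t) ∈ B₁×(0,∞), and z*(ξ,t) → 0 as |ξ| → 1 for each t and as t → 0⁺ for each ξ. -/

import Mathlib

open Real Filter Set

noncomputable section

/-- Partial derivative of `u` in the `i`-th coordinate direction. -/
def pd (n : ℕ) (u : (Fin n → ℝ) → ℝ) (i : Fin n) (x : Fin n → ℝ) : ℝ :=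
  fderiv ℝ u x (Pi.single i 1)

/-- Hessian matrix of `u`. -/
def hess (n : ℕ) (u : (Fin n → ℝ) → ℝ) (x : Fin n → ℝ) : Matrix (Fin n) (Fin n) ℝ :=
  Matrix.of fun i j => pd n (pd n u j) i x

/-- Squared Euclidean norm of the gradient. -/
def gradSq (n : ℕ) (u : (Fin n → ℝ) → ℝ) (x : Fin n → ℝ) : ℝ :=
  ∑ i, (pd n u i x) ^ 2

/-- `w = √(1 - |Du|²)`. -/
def wF (n : ℕ) (u : (Fin n → ℝ) → ℝ) (x : Fin n → ℝ) : ℝ :=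
  Real.sqrt (1 - gradSq n u x)

/-- `γ^{ik} = δ_{ik} + u_i u_k / (w (1 + w))`. -/
def gammaM (n : ℕ) (u : (Fin n → ℝ) → ℝ) (x : Fin n → ℝ) : Matrix (Fin n) (Fin n) ℝ :=
  Matrix.of fun i k =>
    (if i = k then (1 : ℝ) else 0) + pd n u i x * pd n u k x / (wF n u x * (1 + wF n u x))

/-- The principal-curvature matrix `A[u] = (1/w) γ (D²u) γ`. -/
def curvM (n : ℕ) (u : (Fin n → ℝ) → ℝ) (x : Fin n → ℝ) : Matrix (Fin n) (Fin n) ℝ :=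
  (wF n u x)⁻¹ • (gammaM n u x * hess n u x * gammaM n u x)

/-- The positive cone `Γₙ⁺`. -/
def GammaPlus (n : ℕ) : Set (Fin n → ℝ) := {κ | ∀ i, 0 < κ i}

/-- `F(A) = 1 / f_*(κ₁⁻¹, …, κₙ⁻¹)` where `κᵢ` are the eigenvalues of `A`. -/
def Fc (n : ℕ) (fstar : (Fin n → ℝ) → ℝ) (A : Matrix (Fin n) (Fin n) ℝ) : ℝ :=
  if h : A.IsHermitian then 1 / fstar (fun i => (h.eigenvalues i)⁻¹) else 0

/-- `F_*(A) = f_*(eigenvalues of A)`. -/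
def FsM (n : ℕ) (fstar : (Fin n → ℝ) → ℝ) (A : Matrix (Fin n) (Fin n) ℝ) : ℝ :=
  if h : A.IsHermitian then fstar h.eigenvalues else 0

/-- `w* = √(1 - |ξ|²)`. -/
def wS (n : ℕ) (ξ : Fin n → ℝ) : ℝ := Real.sqrt (1 - ∑ i, (ξ i) ^ 2)

/-- `γ*_{ik} = δ_{ik} - ξᵢ ξ_k / (1 + w*)`. -/
def gammaS (n : ℕ) (ξ : Fin n → ℝ) : Matrix (Fin n) (Fin n) ℝ :=
  Matrix.of fun i k => (if i = k then (1 : ℝ) else 0) - ξ i * ξ k / (1 + wS n ξ)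

/-- The dual curvature matrix `A*[u*] = w* γ* (D²u*) γ*`. -/
def dualCurvM (n : ℕ) (ustar : (Fin n → ℝ) → ℝ) (ξ : Fin n → ℝ) :
    Matrix (Fin n) (Fin n) ℝ :=
  wS n ξ • (gammaS n ξ * hess n ustar ξ * gammaS n ξ)

/-- Open Euclidean ball of radius `r` about the origin. -/
def ballE (n : ℕ) (r : ℝ) : Set (Fin n → ℝ) := {ξ | ∑ i, (ξ i) ^ 2 < r ^ 2}

/-- Closed Euclidean ball of radius `r` about the origin. -/
def cballE (n : ℕ) (r : ℝ) : Set (Fin n → ℝ) := {ξ | ∑ i, (ξ i) ^ 2 ≤ r ^ 2}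

/-- Euclidean sphere of radius `r` about the origin. -/
def sphereE (n : ℕ) (r : ℝ) : Set (Fin n → ℝ) := {ξ | ∑ i, (ξ i) ^ 2 = r ^ 2}

/-- The full structural conditions on the curvature function `f_*`. -/
def FullStructural (n : ℕ) (fstar : (Fin n → ℝ) → ℝ) : Prop :=
  ContDiffOn ℝ (⊤ : ℕ∞) fstar (GammaPlus n) ∧
  ConcaveOn ℝ (GammaPlus n) fstar ∧
  (∀ κ ∈ GammaPlus n, 0 < fstar κ) ∧
  (∀ κ ∈ frontier (GammaPlus n), fstar κ = 0) ∧
  (∀ κ ∈ GammaPlus n, ∀ i, 0 < fderiv ℝ fstar κ (Pi.single i 1)) ∧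
  (∀ c : ℝ, 0 < c → ∀ κ ∈ GammaPlus n, fstar (c • κ) = c * fstar κ) ∧
  (∃ ε₀ > (0 : ℝ), ∀ κ ∈ GammaPlus n,
    ε₀ * fstar κ * (∑ i, κ i) ≤ ∑ i, fderiv ℝ fstar κ (Pi.single i 1) * (κ i) ^ 2) ∧
  (∀ C > (0 : ℝ), ∀ E : Set (Fin n → ℝ), IsCompact E → E ⊆ GammaPlus n →
    ∀ i₀ : Fin n, ∃ R > (0 : ℝ), ∀ κ ∈ E, C < fstar (Function.update κ i₀ (κ i₀ + R))) ∧
  fstar (fun _ => 1) = 1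

/-- Conditions A on the initial hypersurface. -/
def ConditionsA (n : ℕ) (u₀ : (Fin n → ℝ) → ℝ) (C₀ C₁ : ℝ) : Prop :=
  ContDiff ℝ (⊤ : ℕ∞) u₀ ∧
  (∀ x, gradSq n u₀ x < 1) ∧
  (∀ x, (hess n u₀ x).PosDef) ∧
  (∀ k : ℕ, ∀ i j : Fin n, ∃ M : ℝ, ∀ x,
      ‖iteratedFDeriv ℝ k (fun y => curvM n u₀ y i j) x‖ ≤ M) ∧
  (∀ x, Real.sqrt ((∑ i, (x i) ^ 2) + C₀) < u₀ x ∧ u₀ x < Real.sqrt ((∑ i, (x i) ^ 2) + C₁))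

/-!
`z*(·, t)` is the Legendre transform of the hyperboloid `√(r² + |x|²)` of radius
`r = [(1+α)t]^{1/(1+α)}`. With `V = ξξᵀ` one has `V² = (1 - w*²)V`, hence `γ*² = 1 - V`, while
`D²w* = -w*⁻¹(1 + w*⁻²V)` and `(1 - V)(1 + w*⁻²V) = 1`. All these matrices commute, so
`A*[w*] = -1` and `A*[z*] = r • 1`. The flow thereby reduces to the ODE `r' = r^{-α}`, and both
limits are elementary.
-/

section DualCurvature

variable {n : ℕ} {ξ : Fin n → ℝ}

lemma isOpen_ballE (n : ℕ) (r : ℝ) : IsOpen (ballE n r) :=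
  isOpen_lt (by fun_prop) continuous_const

lemma ballE_subset_cballE (n : ℕ) (r : ℝ) : ballE n r ⊆ cballE n r :=
  Set.ofPred_subset_ofPred.2 fun _ => le_of_lt

lemma one_sub_sum_sq_pos (hξ : ξ ∈ ballE n 1) : 0 < 1 - ∑ i, ξ i ^ 2 := by
  simpa [ballE] using hξ

lemma wS_nonneg (n : ℕ) (ξ : Fin n → ℝ) : 0 ≤ wS n ξ :=
  Real.sqrt_nonneg _

lemma wS_pos (hξ : ξ ∈ ballE n 1) : 0 < wS n ξ :=
  Real.sqrt_pos.2 (one_sub_sum_sq_pos hξ)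

lemma wS_sq (hξ : ξ ∈ cballE n 1) : wS n ξ ^ 2 = 1 - ∑ i, ξ i ^ 2 :=
  Real.sq_sqrt (by simpa [cballE] using hξ)

lemma wS_le_sqrt_two_mul_one_sub (n : ℕ) (ξ : Fin n → ℝ) :
    wS n ξ ≤ √(2 * (1 - √(∑ i, ξ i ^ 2))) := by
  have hsq : √(∑ i, ξ i ^ 2) ^ 2 = ∑ i, ξ i ^ 2 :=
    Real.sq_sqrt (Finset.sum_nonneg fun i _ => sq_nonneg (ξ i))
  exact Real.sqrt_le_sqrt (by nlinarith [sq_nonneg (1 - √(∑ i, ξ i ^ 2))])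

lemma exists_forall_wS_lt (n : ℕ) {ε : ℝ} (hε : 0 < ε) :
    ∃ δ > 0, ∀ ξ : Fin n → ℝ, 1 - δ < √(∑ i, ξ i ^ 2) → wS n ξ < ε := by
  refine ⟨ε ^ 2 / 2, by positivity, fun ξ hξ => ?_⟩
  exact (wS_le_sqrt_two_mul_one_sub n ξ).trans_lt ((Real.sqrt_lt' hε).2 (by linarith))

lemma pd_div {u v : (Fin n → ℝ) → ℝ} {i : Fin n} (hu : DifferentiableAt ℝ u ξ)
    (hv : DifferentiableAt ℝ v ξ) (hvξ : v ξ ≠ 0) :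
    pd n (fun η => u η / v η) i ξ = (pd n u i ξ * v ξ - u ξ * pd n v i ξ) / v ξ ^ 2 := by
  have hinv : HasFDerivAt (fun η => (v η)⁻¹) (-(v ξ ^ 2)⁻¹ • fderiv ℝ v ξ) ξ :=
    (hasDerivAt_inv hvξ).comp_hasFDerivAt ξ hv.hasFDerivAt
  simp only [pd, div_eq_mul_inv, (hu.hasFDerivAt.fun_mul hinv).fderiv, add_apply, smul_apply,
    smul_eq_mul]
  field_simp
  ring

lemma hasFDerivAt_wS (hξ : ξ ∈ ballE n 1) :
    HasFDerivAt (wS n)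
      (-(wS n ξ)⁻¹ • ∑ i, ξ i • (ContinuousLinearMap.proj i : (Fin n → ℝ) →L[ℝ] ℝ)) ξ := by
  have hsum : HasFDerivAt (fun η : Fin n → ℝ => ∑ i, η i ^ 2)
      (∑ i, (2 * ξ i) • (ContinuousLinearMap.proj i : (Fin n → ℝ) →L[ℝ] ℝ)) ξ :=
    HasFDerivAt.fun_sum fun i _ => by simpa using (hasFDerivAt_apply (𝕜 := ℝ) i ξ).pow 2
  refine ((hsum.const_sub 1).sqrt (one_sub_sum_sq_pos hξ).ne').congr_fderiv ?_
  simp only [wS, mul_smul, ← Finset.smul_sum]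
  module

lemma pd_wS (hξ : ξ ∈ ballE n 1) (i : Fin n) : pd n (wS n) i ξ = -ξ i / wS n ξ := by
  rw [pd, (hasFDerivAt_wS hξ).fderiv]
  simp [Pi.single_apply, div_eq_inv_mul]

lemma hess_wS (hξ : ξ ∈ ballE n 1) :
    hess n (wS n) ξ = -(wS n ξ)⁻¹ • (1 + (wS n ξ ^ 2)⁻¹ • Matrix.vecMulVec ξ ξ) := by
  have hw : wS n ξ ≠ 0 := (wS_pos hξ).ne'
  ext i j
  have hpd : pd n (wS n) j =ᶠ[nhds ξ] fun η => -η j / wS n η := by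
    filter_upwards [(isOpen_ballE n 1).mem_nhds hξ] with η hη using pd_wS hη j
  have hcoord : pd n (fun η => -η j) i ξ = -(1 : Matrix (Fin n) (Fin n) ℝ) i j := by
    rw [pd, (hasFDerivAt_apply (𝕜 := ℝ) j ξ).fun_neg.fderiv]
    simp [Matrix.one_apply, Pi.single_apply, eq_comm]
  rw [hess, Matrix.of_apply, pd, hpd.fderiv_eq, ← pd,
    pd_div (by fun_prop) (hasFDerivAt_wS hξ).differentiableAt hw, pd_wS hξ, hcoord]
  simp only [Matrix.smul_apply, Matrix.add_apply, Matrix.vecMulVec_apply, smul_eq_mul]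
  field_simp
  ring

lemma vecMulVec_self_mul_self (hξ : ξ ∈ cballE n 1) :
    Matrix.vecMulVec ξ ξ * Matrix.vecMulVec ξ ξ =
      (1 - wS n ξ ^ 2) • Matrix.vecMulVec ξ ξ := by
  have hdot : ξ ⬝ᵥ ξ = 1 - wS n ξ ^ 2 := by
    simp [wS_sq hξ, dotProduct, sq]
  rw [Matrix.vecMulVec_mul_vecMulVec, hdot, Matrix.vecMulVec_smul]

lemma gammaS_eq (n : ℕ) (ξ : Fin n → ℝ) :
    gammaS n ξ = 1 - (1 + wS n ξ)⁻¹ • Matrix.vecMulVec ξ ξ := by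
  ext i j
  simp [gammaS, Matrix.one_apply, Matrix.vecMulVec_apply, div_eq_inv_mul]

lemma gammaS_mul_self (hξ : ξ ∈ cballE n 1) :
    gammaS n ξ * gammaS n ξ = 1 - Matrix.vecMulVec ξ ξ := by
  have hw : 1 + wS n ξ ≠ 0 := by linarith [wS_nonneg n ξ]
  simp only [gammaS_eq, sub_mul, mul_sub, smul_mul_assoc, mul_smul_comm, one_mul, mul_one,
    vecMulVec_self_mul_self hξ]
  match_scalars
  · ring
  · field_simp
    ring

lemma one_sub_mul_one_add_vecMulVec (hξ : ξ ∈ ballE n 1) :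
    (1 - Matrix.vecMulVec ξ ξ) * (1 + (wS n ξ ^ 2)⁻¹ • Matrix.vecMulVec ξ ξ) = 1 := by
  have hw : wS n ξ ≠ 0 := (wS_pos hξ).ne'
  simp only [sub_mul, mul_add, mul_smul_comm, one_mul, mul_one,
    vecMulVec_self_mul_self (ballE_subset_cballE n 1 hξ)]
  match_scalars
  · ring
  · field_simp
    ring

lemma dualCurvM_wS (hξ : ξ ∈ ballE n 1) : dualCurvM n (wS n) ξ = -1 := by
  have hcomm : Commute (1 + (wS n ξ ^ 2)⁻¹ • Matrix.vecMulVec ξ ξ) (gammaS n ξ) := by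
    rw [gammaS_eq]
    exact (Commute.one_left _).add_left
      ((Commute.one_right _).sub_right (((Commute.refl _).smul_right _)) |>.smul_left _)
  have hconj :
      gammaS n ξ * (1 + (wS n ξ ^ 2)⁻¹ • Matrix.vecMulVec ξ ξ) * gammaS n ξ = 1 := by
    rw [mul_assoc, hcomm.eq, ← mul_assoc, gammaS_mul_self (ballE_subset_cballE n 1 hξ),
      one_sub_mul_one_add_vecMulVec hξ]
  rw [dualCurvM, hess_wS hξ, mul_smul_comm, smul_mul_assoc, hconj, smul_smul, mul_neg,
    mul_inv_cancel₀ (wS_pos hξ).ne', neg_one_smul]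

lemma pd_const_mul (c : ℝ) (u : (Fin n → ℝ) → ℝ) (i : Fin n) :
    pd n (fun η => c * u η) i = fun η => c * pd n u i η := by
  ext η
  simp only [pd, ← smul_eq_mul, ← Pi.smul_def, fderiv_const_smul_field]
  rfl

lemma hess_const_mul (c : ℝ) (u : (Fin n → ℝ) → ℝ) (ξ : Fin n → ℝ) :
    hess n (fun η => c * u η) ξ = c • hess n u ξ := by
  ext i j
  simp [hess, pd_const_mul]

lemma dualCurvM_const_mul (c : ℝ) (u : (Fin n → ℝ) → ℝ) (ξ : Fin n → ℝ) :
    dualCurvM n (fun η => c * u η) ξ = c • dualCurvM n u ξ := by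
  simp only [dualCurvM, hess_const_mul, mul_smul_comm, smul_mul_assoc, smul_comm c]

lemma FsM_smul_one (fstar : (Fin n → ℝ) → ℝ) (c : ℝ) :
    FsM n fstar (c • 1) = fstar fun _ => c := by
  have hherm : (c • (1 : Matrix (Fin n) (Fin n) ℝ)).IsHermitian := by
    simp [Matrix.IsHermitian]
  have heig : hherm.eigenvalues = fun _ => c := by
    ext i
    have : Nonempty (Fin n) := ⟨i⟩
    have hspec : spectrum ℝ (c • (1 : Matrix (Fin n) (Fin n) ℝ)) = {c} := by
      rw [← Algebra.algebraMap_eq_smul_one, spectrum.scalar_eq]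
    exact Set.mem_singleton_iff.1 (hspec.subset (hherm.eigenvalues_mem_spectrum_real i))
  rw [FsM, dif_pos hherm, heig]

end DualCurvature

section ExpandingHyperboloid

variable {α : ℝ}

/-- The radius `[(1+α)t]^{1/(1+α)}` at time `t` of the hyperboloid that expands from its
asymptotic cone under the flow with exponent `α`. -/
def hyperboloidRadius (α t : ℝ) : ℝ :=
  ((1 + α) * t) ^ ((1 : ℝ) / (1 + α))

/-- The Legendre transform `z*(ξ, t)` of the expanding hyperboloid of radius
`hyperboloidRadius α t`, as a function of the dual variable `ξ` and the time `t`. -/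
def dualHyperboloid (n : ℕ) (α : ℝ) (ξ : Fin n → ℝ) (t : ℝ) : ℝ :=
  -hyperboloidRadius α t * wS n ξ

lemma hyperboloidRadius_pos (hα : -1 < α) {t : ℝ} (ht : 0 < t) : 0 < hyperboloidRadius α t :=
  Real.rpow_pos_of_pos (mul_pos (by linarith) ht) _

lemma hasDerivAt_hyperboloidRadius (hα : -1 < α) {t : ℝ} (ht : 0 < t) :
    HasDerivAt (hyperboloidRadius α) (hyperboloidRadius α t ^ (-α)) t := by
  have hα' : 0 < 1 + α := by linarith
  have hbase : 0 < (1 + α) * t := mul_pos hα' ht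
  have hexp : 1 / (1 + α) - 1 = 1 / (1 + α) * -α := by field_simp; ring
  refine (((hasDerivAt_id t).const_mul (1 + α)).rpow_const (Or.inl hbase.ne')).congr_deriv ?_
  rw [hyperboloidRadius, ← Real.rpow_mul hbase.le, ← hexp, id]
  field_simp

lemma tendsto_hyperboloidRadius_zero (hα : -1 < α) :
    Tendsto (hyperboloidRadius α) (nhds 0) (nhds 0) := by
  have hexp : 0 < 1 / (1 + α) := one_div_pos.2 (by linarith)
  have hcont : Continuous (hyperboloidRadius α) :=
    (continuous_const.mul continuous_id).rpow_const fun _ => Or.inr hexp.le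
  have hzero : hyperboloidRadius α 0 = 0 := by
    rw [hyperboloidRadius, mul_zero, Real.zero_rpow hexp.ne']
  simpa only [hzero] using hcont.tendsto 0

lemma dualCurvM_dualHyperboloid {n : ℕ} {ξ : Fin n → ℝ} (hξ : ξ ∈ ballE n 1) (α t : ℝ) :
    dualCurvM n (fun η => dualHyperboloid n α η t) ξ = hyperboloidRadius α t • 1 := by
  simp only [dualHyperboloid, dualCurvM_const_mul, dualCurvM_wS hξ, smul_neg, neg_smul, neg_neg]

lemma hasDerivAt_dualHyperboloid {n : ℕ} (hα : -1 < α) (ξ : Fin n → ℝ) {t : ℝ} (ht : 0 < t) :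
    HasDerivAt (dualHyperboloid n α ξ) (-hyperboloidRadius α t ^ (-α) * wS n ξ) t :=
  (hasDerivAt_hyperboloidRadius hα ht).fun_neg.mul_const (wS n ξ)

lemma exists_forall_abs_dualHyperboloid_lt (n : ℕ) (hα : -1 < α) {t ε : ℝ} (ht : 0 < t)
    (hε : 0 < ε) :
    ∃ δ > 0, ∀ ξ : Fin n → ℝ, 1 - δ < √(∑ i, ξ i ^ 2) → |dualHyperboloid n α ξ t| < ε := by
  have hr := hyperboloidRadius_pos hα ht
  obtain ⟨δ, hδ, hwS⟩ := exists_forall_wS_lt n (div_pos hε hr)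
  refine ⟨δ, hδ, fun ξ hξ => ?_⟩
  rw [dualHyperboloid, abs_mul, abs_neg, abs_of_pos hr, abs_of_nonneg (wS_nonneg n ξ)]
  exact (lt_div_iff₀' hr).1 (hwS ξ hξ)

lemma tendsto_dualHyperboloid_zero {n : ℕ} (hα : -1 < α) (ξ : Fin n → ℝ) :
    Tendsto (dualHyperboloid n α ξ) (nhds 0) (nhds 0) := by
  simpa only [dualHyperboloid, neg_zero, zero_mul] using!
    (tendsto_hyperboloidRadius_zero hα).neg.mul_const (wS n ξ)

end ExpandingHyperboloid

theorem statement6_general (n : ℕ) (α : ℝ) (hα : -1 < α) (fstar : (Fin n → ℝ) → ℝ)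
    (hdiag : ∀ c : ℝ, 0 < c → fstar (fun _ => c) = c) :
    (∀ ξ ∈ ballE n 1, ∀ t : ℝ, 0 < t →
      HasDerivAt (fun s => dualHyperboloid n α ξ s)
        (-(FsM n fstar (dualCurvM n (fun η => dualHyperboloid n α η t) ξ)) ^ (-α) * wS n ξ) t) ∧
    (∀ t > (0 : ℝ), ∀ ε > (0 : ℝ), ∃ δ > (0 : ℝ), ∀ ξ ∈ ballE n 1,
      1 - δ < √(∑ i, (ξ i) ^ 2) → |dualHyperboloid n α ξ t| < ε) ∧
    (∀ ξ ∈ ballE n 1,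
      Tendsto (fun t => dualHyperboloid n α ξ t) (nhdsWithin 0 (Set.Ioi 0)) (nhds 0)) := by
  refine ⟨fun ξ hξ t ht => ?_, fun t ht ε hε => ?_, fun ξ _ => ?_⟩
  · rw [dualCurvM_dualHyperboloid hξ, FsM_smul_one, hdiag _ (hyperboloidRadius_pos hα ht)]
    exact hasDerivAt_dualHyperboloid hα ξ ht
  · obtain ⟨δ, hδ, hlt⟩ := exists_forall_abs_dualHyperboloid_lt n hα ht hε
    exact ⟨δ, hδ, fun ξ _ => hlt ξ⟩
  · exact (tendsto_dualHyperboloid_zero hα ξ).mono_left nhdsWithin_le_nhds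

/-- `z*(ξ,t) = −[(1+α)t]^{1/(1+α)}√(1−|ξ|²)` solves the dual flow
`∂ₜz* = −F_*(A*[z*])^{−α} w*` on `B₁×(0,∞)`, vanishes as `|ξ| → 1` for each `t > 0`,
and tends to `0` as `t → 0⁺` for each `ξ`. -/
theorem statement6 (n : ℕ) (hn : 1 ≤ n) (α : ℝ) (hα : 0 < α)
    (fstar : (Fin n → ℝ) → ℝ)
    (hpos : ∀ κ ∈ GammaPlus n, 0 < fstar κ)
    (hhom : ∀ c : ℝ, 0 < c → ∀ κ ∈ GammaPlus n, fstar (c • κ) = c * fstar κ)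
    (hnorm : fstar (fun _ => 1) = 1)
    (zstar : (Fin n → ℝ) → ℝ → ℝ)
    (hz : zstar = fun ξ t =>
      -(((1 + α) * t) ^ ((1 : ℝ) / (1 + α))) * Real.sqrt (1 - ∑ i, (ξ i) ^ 2)) :
    (∀ ξ ∈ ballE n 1, ∀ t : ℝ, 0 < t →
      HasDerivAt (fun s => zstar ξ s)
        (-(FsM n fstar (dualCurvM n (fun η => zstar η t) ξ)) ^ (-α) * wS n ξ) t) ∧
    (∀ t > (0 : ℝ), ∀ ε > (0 : ℝ), ∃ δ > (0 : ℝ), ∀ ξ ∈ ballE n 1,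
      1 - δ < Real.sqrt (∑ i, (ξ i) ^ 2) → |zstar ξ t| < ε) ∧
    (∀ ξ ∈ ballE n 1,
      Tendsto (fun t => zstar ξ t) (nhdsWithin 0 (Set.Ioi 0)) (nhds 0)) := by
  subst hz
  exact statement6_general n α (by linarith) fstar fun c hc => by
    simpa [hnorm, Pi.smul_def] using hhom c hc (fun _ => 1) fun _ => one_pos

end
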